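/- For every real number q with 0 < q < 1, the function q ↦ (1/4)·(1 + k(q)^2)/(1 − 4k(q) − k(q)^2) is differentiable at q with derivative equal to E(q^2)^8 E(q^5)^3 / E(q)^7. -/

import Mathlib

open Real

/-- Euler's product `E(q) = ∏_{j=1}^∞ (1 - q^j)`. -/
noncomputable def eulerE (q : ℝ) : ℝ := ∏' j : ℕ, (1 - q ^ (j + 1))

/-- Ramanujan's level-10 function `k(q)`. -/
noncomputable def ramK (q : ℝ) : ℝ :=
  q * ∏' j : ℕ,
    ((1 - q ^ (10 * j + 1)) * (1 - q ^ (10 * j + 2)) * (1 - q ^ (10 * j + 8)) *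
        (1 - q ^ (10 * j + 9))) /
      ((1 - q ^ (10 * j + 3)) * (1 - q ^ (10 * j + 4)) * (1 - q ^ (10 * j + 6)) *
        (1 - q ^ (10 * j + 7)))


noncomputable def qP (z q : ℂ) : ℂ := ∏' n : ℕ, (1 - z * q ^ n)

lemma qP_summable (z : ℂ) {q : ℂ} (hq : ‖q‖ < 1) : Summable fun n : ℕ => ‖-(z * q ^ n)‖ := by
  simp only [norm_neg, norm_mul, norm_pow]
  exact (summable_geometric_of_lt_one (norm_nonneg _) hq).mul_left _

lemma qP_mult (z : ℂ) {q : ℂ} (hq : ‖q‖ < 1) : Multipliable fun n : ℕ => (1 - z * q ^ n) := by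
  simpa [sub_eq_add_neg] using multipliable_one_add_of_summable (qP_summable z hq)

lemma qP_hasProd (z : ℂ) {q : ℂ} (hq : ‖q‖ < 1) :
    HasProd (fun n : ℕ => (1 - z * q ^ n)) (qP z q) := (qP_mult z hq).hasProd

lemma qP_ne_zero {z q : ℂ} (hq : ‖q‖ < 1) (h : ∀ n : ℕ, z * q ^ n ≠ 1) : qP z q ≠ 0 := by
  have := tprod_one_add_ne_zero_of_summable (f := fun n : ℕ => -(z * q ^ n))
    (fun n => by rw [← sub_eq_add_neg]; exact sub_ne_zero.mpr (h n).symm) (qP_summable z hq)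
  simpa [qP, sub_eq_add_neg] using this

lemma qP_ne_zero' {z q : ℂ} (hq : ‖q‖ < 1) (h : ‖z‖ < 1) : qP z q ≠ 0 := by
  refine qP_ne_zero hq fun n hn => ?_
  have h1 : ‖z * q ^ n‖ < 1 := by
    rw [norm_mul, norm_pow]
    calc ‖z‖ * ‖q‖ ^ n ≤ ‖z‖ * 1 := by
          gcongr; exact pow_le_one₀ (norm_nonneg _) hq.le
      _ < 1 := by linarith
  rw [hn] at h1; simp at h1

lemma qP_succ (z : ℂ) {q : ℂ} (hq : ‖q‖ < 1) : qP z q = (1 - z) * qP (z * q) q := by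
  have h : Multipliable fun n : ℕ => (1 - z * q ^ (n+1)) := by
    simpa [pow_succ', mul_assoc] using qP_mult (z * q) hq
  have := tprod_eq_zero_mul' (f := fun n : ℕ => (1 - z * q ^ n)) h
  rw [qP, this]
  simp [qP, pow_succ', mul_assoc]

lemma qP_neg (z : ℂ) {q : ℂ} (hq : ‖q‖ < 1) : qP z q * qP (-z) q = qP (z ^ 2) (q ^ 2) := by
  rw [qP, qP, ← (qP_mult z hq).tprod_mul (qP_mult (-z) hq), qP]
  exact tprod_congr fun n => by ring

lemma tprod_group {g : ℕ → ℂ} (N : ℕ) [NeZero N] (hg : Multipliable g)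
    (h2 : ∀ a, Multipliable fun j => g (N * j + a)) :
    ∏' n, g n = ∏ a ∈ Finset.range N, ∏' j, g (N * j + a) := by
  have h1 := (Nat.divModEquiv N).symm.hasProd_iff.mpr hg.hasProd
  have h3 := h1.prod_fiberwise (f := g ∘ ⇑(Nat.divModEquiv N).symm)
    (g := fun j => ∏ a : Fin N, g (N * j + a)) (fun j => by
      convert hasProd_fintype _ using 3
      simp [mul_comm])
  rw [← h3.tprod_eq, ← Multipliable.tprod_finsetProd (fun a _ => h2 a)]
  exact tprod_congr fun j => (Finset.prod_range fun a => g (N * j + a)).symm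

lemma qP_split (z : ℂ) {q : ℂ} (hq : ‖q‖ < 1) (N : ℕ) [NeZero N] :
    qP z q = ∏ a ∈ Finset.range N, qP (z * q ^ a) (q ^ N) := by
  have hqN : ‖q ^ N‖ < 1 := by
    rw [norm_pow]; exact pow_lt_one₀ (norm_nonneg _) hq (NeZero.ne N)
  rw [qP, tprod_group N (qP_mult z hq)]
  · refine Finset.prod_congr rfl fun a _ => tprod_congr fun n => by ring
  · intro a
    refine (qP_mult (z * q ^ a) hqN).congr fun n => by ring

lemma prod_deriv {f : ℕ → ℂ → ℂ} {U : Set ℂ} (hU : IsOpen U) {x : ℂ} (hx : x ∈ U)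
    (hd : ∀ n, DifferentiableOn ℂ (f n) U) {u : ℕ → ℝ} (hu : Summable u)
    (hb : ∀ n, ∀ s ∈ U, ‖f n s‖ ≤ u n) (h0 : ∀ n, 1 + f n x ≠ 0) :
    ∃ D, HasSum (fun n => deriv (f n) x / (1 + f n x)) D ∧
      HasDerivAt (fun s => ∏' n, (1 + f n s)) ((∏' n, (1 + f n x)) * D) x := by
  have hP := hu.hasProdLocallyUniformlyOn_nat_one_add hU (.of_forall hb)
    (fun n => (hd n).continuousOn)
  have hne : ∏' n, (1 + f n x) ≠ 0 := tprod_one_add_ne_zero_of_summable h0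
    (hu.of_nonneg_of_le (fun _ => norm_nonneg _) fun n => hb n x hx)
  have hd' : ∀ n, DifferentiableOn ℂ (fun s => 1 + f n s) U := fun n => (hd n).const_add 1
  have hD := hP.differentiableOn (.of_forall fun t => by
    simpa [Finset.prod_fn] using DifferentiableOn.fun_finsetProd (fun n _ => hd' n)) hU
  have hDx := (hD x hx).differentiableAt (hU.mem_nhds hx)
  refine ⟨logDeriv (fun s => ∏' n, (1 + f n s)) x, ?_, ?_⟩
  · refine Complex.logDeriv_tendsto hU hx hP (.of_forall <| fun t => by
      simpa [Finset.prod_fn] using DifferentiableOn.fun_finsetProd (fun n _ => hd' n)) hne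
      |>.congr fun b ↦ ?_
    rw [logDeriv_prod (fun i _ ↦ h0 i)
      (fun i _ ↦ (hd' i x hx).differentiableAt (hU.mem_nhds hx))]
    refine Finset.sum_congr rfl fun n _ => ?_
    simp [logDeriv, deriv_const_add]
  · rw [logDeriv_apply, mul_div_cancel₀ _ hne]
    exact hDx.hasDerivAt


noncomputable def qF (q : ℂ) (m : ℕ) : ℂ := ∏ k ∈ Finset.range m, (1 - q ^ (k + 1))
noncomputable def qR (q : ℂ) (m : ℤ) : ℂ := if m < 0 then 0 else (qF q m.toNat)⁻¹
noncomputable def qS (q : ℂ) (n : ℤ) : ℂ := (-1) ^ n * q ^ (n * (n - 1) / 2)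

lemma one_sub_pow_ne {q : ℂ} (hq : ‖q‖ < 1) (k : ℕ) : 1 - q ^ (k + 1) ≠ 0 := by
  intro h
  have h1 : ‖q ^ (k + 1)‖ < 1 := by
    rw [norm_pow]; exact pow_lt_one₀ (norm_nonneg _) hq (by omega)
  rw [← sub_eq_zero.mp h] at h1
  simp at h1

lemma qF_ne {q : ℂ} (hq : ‖q‖ < 1) (m : ℕ) : qF q m ≠ 0 :=
  Finset.prod_ne_zero_iff.mpr fun k _ => one_sub_pow_ne hq k

lemma qR_rec {q : ℂ} (hq : ‖q‖ < 1) (m : ℤ) : qR q (m - 1) = (1 - q ^ m) * qR q m := by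
  rcases lt_trichotomy m 0 with h | h | h
  · simp [qR, h, show m - 1 < 0 by omega]
  · subst h; simp [qR]
  · obtain ⟨k, rfl⟩ : ∃ k : ℕ, m = k + 1 := ⟨(m - 1).toNat, by omega⟩
    have h1 : ¬ ((k : ℤ) + 1 < 0) := by omega
    have h2 : ((k : ℤ) + 1).toNat = k + 1 := by omega
    have e : q ^ ((k : ℤ) + 1) = q ^ (k + 1) := by exact_mod_cast zpow_natCast q (k + 1)
    simp only [qR, h1, if_false, h2, e, add_sub_cancel_right]
    rw [if_neg (by omega), Int.toNat_natCast, qF, qF, Finset.prod_range_succ, mul_inv, mul_comm,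
      mul_assoc, inv_mul_cancel₀ (one_sub_pow_ne hq k), mul_one]

lemma qS_succ {q : ℂ} (h0 : q ≠ 0) (n : ℤ) : qS q (n + 1) = -(q ^ n) * qS q n := by
  have e : (n + 1) * (n + 1 - 1) / 2 = n + n * (n - 1) / 2 := by
    rw [show (n + 1) * (n + 1 - 1) = n * (n - 1) + n * 2 by ring,
      Int.add_mul_ediv_right _ _ (by norm_num)]; ring
  rw [qS, qS, e, zpow_add₀ h0, zpow_add_one₀ (by norm_num)]; ring

noncomputable def qA (q : ℂ) (N : ℕ) (n : ℤ) : ℂ :=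
  qS q n * (qF q (2 * N) * qR q (N - n) * qR q (N + n))

lemma qA_rec {q : ℂ} (h0 : q ≠ 0) (hq : ‖q‖ < 1) (N : ℕ) (n : ℤ) :
    qA q (N + 1) n = (1 + q ^ (2 * N + 1)) * qA q N n - q ^ N * qA q N (n - 1)
      - q ^ (N + 1) * qA q N (n + 1) := by
  have s1 := qS_succ h0 n
  have s2 := qS_succ h0 (n - 1)
  rw [sub_add_cancel] at s2
  have r1 := qR_rec hq (N + 1 - n)
  have r2 := qR_rec hq (N + 1 + n)
  have r3 := qR_rec hq (N - n)
  have r4 := qR_rec hq (N + n)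
  have hA : q ^ N ≠ 0 := pow_ne_zero _ h0
  have hB : q ^ n ≠ 0 := zpow_ne_zero _ h0
  have z1 : q ^ ((N : ℤ) + 1 - n) = q * q ^ N / q ^ n := by
    rw [zpow_sub₀ h0, zpow_add_one₀ h0, zpow_natCast]; ring
  have z2 : q ^ ((N : ℤ) + 1 + n) = q * q ^ N * q ^ n := by
    rw [zpow_add₀ h0, zpow_add_one₀ h0, zpow_natCast]; ring
  have z3 : q ^ ((N : ℤ) - n) = q ^ N / q ^ n := by
    rw [zpow_sub₀ h0, zpow_natCast]
  have z4 : q ^ ((N : ℤ) + n) = q ^ N * q ^ n := by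
    rw [zpow_add₀ h0, zpow_natCast]
  have z5 : q ^ (n - 1) = q ^ n / q := by rw [zpow_sub_one₀ h0]; rfl
  have s3 : qS q (n - 1) = -(q / q ^ n) * qS q n := by
    rw [s2, z5]; field_simp
  rw [show (N : ℤ) + 1 - n - 1 = N - n by ring, z1] at r1
  rw [show (N : ℤ) + 1 + n - 1 = N + n by ring, z2] at r2
  rw [z3, r1] at r3
  rw [z4, r2] at r4
  have f : qF q (2 * (N + 1)) = qF q (2 * N) * (1 - q * (q ^ N) ^ 2) * (1 - q ^ 2 * (q ^ N) ^ 2) := by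
    rw [show 2 * (N + 1) = 2 * N + 1 + 1 by ring, qF, Finset.prod_range_succ,
      Finset.prod_range_succ, ← qF]; ring
  unfold qA
  rw [show ((N + 1 : ℕ) : ℤ) = N + 1 by push_cast; rfl, f, s1, s3, r1, r2,
    show (N : ℤ) - (n - 1) = N + 1 - n by ring, show (N : ℤ) + (n - 1) = N + n - 1 by ring,
    show (N : ℤ) - (n + 1) = N - n - 1 by ring, show (N : ℤ) + (n + 1) = N + 1 + n by ring,
    r3, r4]
  generalize qR q (N + 1 - n) = R
  generalize qR q (N + 1 + n) = T
  rw [show q ^ (2 * N + 1) = q * (q ^ N) ^ 2 by ring, show q ^ (N + 1) = q * q ^ N by ring]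
  generalize q ^ N = A at *
  generalize q ^ n = B at *
  field_simp
  ring

lemma finite_jtp {q : ℂ} (h0 : q ≠ 0) (hq : ‖q‖ < 1) {z : ℂ} (hz : z ≠ 0) (N : ℕ) :
    HasSum (fun n : ℤ => qA q N n * z ^ n)
      (∏ k ∈ Finset.range N, ((1 - z * q ^ k) * (1 - q / z * q ^ k))) := by
  induction N with
  | zero =>
    have : (fun n : ℤ => qA q 0 n * z ^ n) = fun n => if n = 0 then 1 else 0 := by
      ext n
      rcases lt_trichotomy n 0 with h | h | h
      · simp [qA, qR, h, h.ne]
      · subst h; simp [qA, qR, qS, qF]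
      · simp [qA, qR, h, h.ne']
    rw [this]
    simpa using hasSum_ite_eq (0 : ℤ) (1 : ℂ)
  | succ N ih =>
    have h1 := (Equiv.subRight (1 : ℤ)).hasSum_iff.mpr ih
    have h2 := (Equiv.addRight (1 : ℤ)).hasSum_iff.mpr ih
    have := ((ih.mul_left (1 + q ^ (2 * N + 1))).sub (h1.mul_left (q ^ N * z))).sub
      (h2.mul_left (q ^ (N + 1) / z))
    have e1 : (fun n : ℤ => qA q (N + 1) n * z ^ n) = fun n =>
        (1 + q ^ (2 * N + 1)) * (qA q N n * z ^ n) - q ^ N * z * (qA q N (n - 1) * z ^ (n - 1))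
        - q ^ (N + 1) / z * (qA q N (n + 1) * z ^ (n + 1)) := by
      ext n
      rw [qA_rec h0 hq, zpow_sub_one₀ hz, zpow_add_one₀ hz]
      field_simp
    rw [e1]
    have e2 : ∏ k ∈ Finset.range (N + 1), ((1 - z * q ^ k) * (1 - q / z * q ^ k)) =
        (1 + q ^ (2 * N + 1)) * ∏ k ∈ Finset.range N, (1 - z * q ^ k) * (1 - q / z * q ^ k) -
        q ^ N * z * ∏ k ∈ Finset.range N, (1 - z * q ^ k) * (1 - q / z * q ^ k) -
        q ^ (N + 1) / z * ∏ k ∈ Finset.range N, (1 - z * q ^ k) * (1 - q / z * q ^ k) := by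
      rw [Finset.prod_range_succ]
      field_simp
      ring
    rw [e2]
    exact this

open Filter Topology in
lemma qS_summable {q : ℂ} (h0 : q ≠ 0) (hq : ‖q‖ < 1) {z : ℂ} (hz : z ≠ 0) :
    Summable fun n : ℤ => ‖qS q n * z ^ n‖ := by
  have key : ∀ c : ℂ, ∀ᶠ n : ℕ in atTop, ‖q ^ n * c‖ ≤ 1 / 2 := by
    intro c
    have h1 : Tendsto (fun n : ℕ => ‖q ^ n * c‖) atTop (𝓝 0) := by
      have := ((tendsto_pow_atTop_nhds_zero_of_norm_lt_one hq).mul_const c).norm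
      simpa using this
    exact h1.eventually_le_const (by norm_num)
  apply Summable.of_nat_of_neg
  · refine summable_of_ratio_norm_eventually_le (r := 1 / 2) (by norm_num) ?_
    filter_upwards [key z] with n hn
    have e : qS q ((n + 1 : ℕ) : ℤ) * z ^ ((n + 1 : ℕ) : ℤ)
        = -(q ^ n * z) * (qS q n * z ^ (n : ℤ)) := by
      rw [show ((n + 1 : ℕ) : ℤ) = n + 1 by push_cast; rfl, qS_succ h0, zpow_add_one₀ hz,
        zpow_natCast]; ring
    rw [e, norm_norm, norm_norm, norm_mul, norm_neg]
    gcongr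
  · refine summable_of_ratio_norm_eventually_le (r := 1 / 2) (by norm_num) ?_
    filter_upwards [key (q / z)] with n hn
    have e : qS q (-((n + 1 : ℕ) : ℤ)) * z ^ (-((n + 1 : ℕ) : ℤ))
        = -(q ^ n * (q / z)) * (qS q (-n) * z ^ (-(n : ℤ))) := by
      have := qS_succ h0 (-((n + 1 : ℕ) : ℤ))
      rw [show -((n + 1 : ℕ) : ℤ) + 1 = -n by push_cast; ring] at this
      rw [this, zpow_neg, zpow_neg, zpow_neg, zpow_natCast, zpow_natCast, zpow_natCast, pow_succ, pow_succ]
      field_simp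
    rw [e, norm_norm, norm_norm, norm_mul, norm_neg]
    gcongr

noncomputable def th (z q : ℂ) : ℂ := qP z q * qP (q / z) q

open Filter Topology in
lemma jtp {q : ℂ} (h0 : q ≠ 0) (hq : ‖q‖ < 1) {z : ℂ} (hz : z ≠ 0) :
    th z q = (qP q q)⁻¹ * ∑' n : ℤ, qS q n * z ^ n := by
  have hE : qP q q ≠ 0 := qP_ne_zero' hq hq
  have tF : Tendsto (qF q) atTop (𝓝 (qP q q)) := by
    have := (qP_hasProd q hq).tendsto_prod_nat
    refine this.congr fun n => Finset.prod_congr rfl fun k _ => by ring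
  have tFi := tF.inv₀ hE
  obtain ⟨C1, hC1⟩ := (Metric.isBounded_range_of_tendsto _ tF).exists_norm_le
  obtain ⟨C2, hC2⟩ := (Metric.isBounded_range_of_tendsto _ tFi).exists_norm_le
  have b1 : ∀ n, ‖qF q n‖ ≤ C1 := fun n => hC1 _ ⟨n, rfl⟩
  have b2 : ∀ n, ‖(qF q n)⁻¹‖ ≤ C2 := fun n => hC2 _ ⟨n, rfl⟩
  have C1n : 0 ≤ C1 := (norm_nonneg _).trans (b1 0)
  have C2n : 0 ≤ C2 := (norm_nonneg _).trans (b2 0)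
  have b3 : ∀ m, ‖qR q m‖ ≤ C2 := by
    intro m
    unfold qR
    split_ifs
    · simpa using C2n
    · exact b2 _
  have tR : ∀ n : ℤ, Tendsto (fun N : ℕ => qR q (N + n)) atTop (𝓝 (qP q q)⁻¹) := by
    intro n
    have t1 : Tendsto (fun N : ℕ => ((N : ℤ) + n).toNat) atTop atTop := by
      refine tendsto_atTop.mpr fun b => ?_
      filter_upwards [eventually_ge_atTop (b + n.natAbs)] with N hN
      omega
    refine (tFi.comp t1).congr' ?_
    filter_upwards [eventually_ge_atTop n.natAbs] with N hN
    simp [qR, show ¬ ((N : ℤ) + n < 0) by omega]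
  have t2 : Tendsto (fun N : ℕ => 2 * N) atTop atTop :=
    tendsto_atTop_mono (fun n => show n ≤ 2 * n by omega) tendsto_id
  have T := tendsto_tsum_of_dominated_convergence (𝓕 := atTop)
    (f := fun (N : ℕ) (n : ℤ) => qA q N n * z ^ n) (g := fun n => (qP q q)⁻¹ * (qS q n * z ^ n))
    (bound := fun n => (C1 * C2 * C2) * ‖qS q n * z ^ n‖)
    ((qS_summable h0 hq hz).mul_left _) (by
      intro n
      have := ((((tF.comp t2).mul (tR (-n))).mul (tR n)).const_mul (qS q n)).mul_const (z ^ n)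
      rw [mul_inv_cancel₀ hE, one_mul] at this
      rw [show (qP q q)⁻¹ * (qS q n * z ^ n) = qS q n * (qP q q)⁻¹ * z ^ n by ring]
      refine this.congr fun N => ?_
      simp only [qA, Function.comp, sub_eq_add_neg]) (by
      refine Eventually.of_forall fun N n => ?_
      have : qA q N n * z ^ n
        = (qF q (2 * N) * qR q (N - n) * qR q (N + n)) * (qS q n * z ^ n) := by
        unfold qA; ring
      rw [this, norm_mul, norm_mul, norm_mul]
      gcongr
      · exact b1 _
      · exact b3 _
      · exact b3 _)
  simp_rw [(finite_jtp h0 hq hz _).tsum_eq] at T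
  rw [tsum_mul_left] at T
  have T2 := (qP_hasProd z hq).tendsto_prod_nat.mul (qP_hasProd (q / z) hq).tendsto_prod_nat
  refine tendsto_nhds_unique (T2.congr fun n => ?_) T
  rw [Finset.prod_mul_distrib]

noncomputable def Ph (q w : ℂ) : ℂ := ∑' n : ℤ, qS (q ^ 2) n * w ^ n

lemma Ph_shift {q : ℂ} (h0 : q ≠ 0) {w : ℂ} (hw : w ≠ 0) :
    Ph q w = -w * Ph q (q ^ 2 * w) := by
  rw [Ph, ← (Equiv.addRight (1 : ℤ)).tsum_eq, Ph, ← tsum_mul_left]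
  refine tsum_congr fun n => ?_
  rw [Equiv.coe_addRight, qS_succ (pow_ne_zero 2 h0), zpow_add_one₀ hw, mul_zpow]
  ring

noncomputable def evOdd : (ℤ × ℤ) ⊕ (ℤ × ℤ) ≃ ℤ × ℤ :=
  Equiv.ofBijective
    (Sum.elim (fun p => (p.1 + p.2, p.1 - p.2)) (fun p => (p.1 + p.2 + 1, p.1 - p.2))) (by
    constructor
    · rintro (⟨a, b⟩ | ⟨a, b⟩) (⟨c, d⟩ | ⟨c, d⟩) h <;>
        simp only [Sum.elim_inl, Sum.elim_inr, Prod.mk.injEq] at h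
      · rw [show a = c by omega, show b = d by omega]
      · omega
      · omega
      · rw [show a = c by omega, show b = d by omega]
    · rintro ⟨m, n⟩
      by_cases h : (m + n) % 2 = 0
      · refine ⟨Sum.inl ((m + n) / 2, (m - n) / 2), ?_⟩
        simp only [Sum.elim_inl, Prod.mk.injEq]; omega
      · refine ⟨Sum.inr ((m + n) / 2, (m - n) / 2), ?_⟩
        simp only [Sum.elim_inr, Prod.mk.injEq]; omega)

lemma tri_two (n : ℤ) : 2 * (n * (n - 1) / 2) = n * (n - 1) := by
  refine Int.mul_ediv_cancel' ?_
  have := (Int.even_mul_pred_self n).two_dvd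
  exact this

lemma qS_even {q : ℂ} (h0 : q ≠ 0) {x y : ℂ} (hx : x ≠ 0) (hy : y ≠ 0) (a b : ℤ) :
    qS q (a + b) * (x * y) ^ (a + b) * (qS q (a - b) * (x / y) ^ (a - b)) =
    (qS (q ^ 2) a * (-x ^ 2) ^ a) * (qS (q ^ 2) b * (-(q * y ^ 2)) ^ b) := by
  have m1 : (-1 : ℂ) ≠ 0 := by norm_num
  have e : (a + b) * (a + b - 1) / 2 + (a - b) * (a - b - 1) / 2
      = 2 * (a * (a - 1) / 2) + 2 * (b * (b - 1) / 2) + b := by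
    have := tri_two (a + b)
    have := tri_two (a - b)
    have := tri_two a
    have := tri_two b
    linarith
  have E : q ^ ((a + b) * (a + b - 1) / 2) * q ^ ((a - b) * (a - b - 1) / 2)
      = (q ^ 2) ^ (a * (a - 1) / 2) * (q ^ 2) ^ (b * (b - 1) / 2) * q ^ b := by
    rw [← zpow_add₀ h0, e, zpow_add₀ h0, zpow_add₀ h0, zpow_mul, zpow_mul]
    rfl
  have sq : ∀ c : ℤ, ((-1 : ℂ) ^ c) ^ 2 = 1 := fun c => by
    rw [← zpow_natCast, ← zpow_mul, mul_comm, zpow_mul]; norm_num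
  have X : (x * y) ^ (a + b) * (x / y) ^ (a - b) = (x ^ a) ^ 2 * (y ^ b) ^ 2 := by
    rw [mul_zpow, div_zpow, zpow_add₀ hx, zpow_add₀ hy, zpow_sub₀ hx, zpow_sub₀ hy]
    have := zpow_ne_zero a hx
    have := zpow_ne_zero b hx
    have := zpow_ne_zero a hy
    have := zpow_ne_zero b hy
    field_simp
  have Y : (-x ^ 2) ^ a = (-1) ^ a * (x ^ a) ^ 2 := by
    rw [show -x ^ 2 = -1 * (x * x) by ring, mul_zpow, mul_zpow]; ring
  have Z : (-(q * y ^ 2)) ^ b = (-1) ^ b * q ^ b * (y ^ b) ^ 2 := by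
    rw [show -(q * y ^ 2) = -1 * q * (y * y) by ring, mul_zpow, mul_zpow, mul_zpow]; ring
  have S : (-1 : ℂ) ^ (a + b) * (-1) ^ (a - b) = 1 := by
    rw [← zpow_add₀ m1, show a + b + (a - b) = a + a by ring, zpow_add₀ m1]
    linear_combination sq a
  unfold qS
  rw [Y, Z]
  calc _ = ((-1 : ℂ) ^ (a + b) * (-1) ^ (a - b)) * ((x * y) ^ (a + b) * (x / y) ^ (a - b)) *
        (q ^ ((a + b) * (a + b - 1) / 2) * q ^ ((a - b) * (a - b - 1) / 2)) := by ring
    _ = (((-1 : ℂ) ^ a) ^ 2 * ((-1) ^ b) ^ 2) * ((x ^ a) ^ 2 * (y ^ b) ^ 2) *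
        ((q ^ 2) ^ (a * (a - 1) / 2) * (q ^ 2) ^ (b * (b - 1) / 2) * q ^ b) := by
        rw [S, X, E, sq, sq, one_mul (1 : ℂ)]
    _ = _ := by ring

lemma qS_odd {q : ℂ} (h0 : q ≠ 0) {x y : ℂ} (hx : x ≠ 0) (hy : y ≠ 0) (a b : ℤ) :
    qS q (a + b + 1) * (x * y) ^ (a + b + 1) * (qS q (a - b) * (x / y) ^ (a - b)) =
    -(x * y) * ((qS (q ^ 2) a * (-(q * x ^ 2)) ^ a) * (qS (q ^ 2) b * (-(q ^ 2 * y ^ 2)) ^ b)) := by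
  rw [qS_succ h0, zpow_add_one₀ (mul_ne_zero hx hy)]
  have := qS_even h0 hx hy a b
  have e : ∀ c w : ℂ, (-(c * w)) ^ a = c ^ a * (-w) ^ a := fun c w => by
    rw [← mul_zpow]; congr 1; ring
  have e' : ∀ c w : ℂ, (-(c * w)) ^ b = c ^ b * (-w) ^ b := fun c w => by
    rw [← mul_zpow]; congr 1; ring
  rw [show q ^ 2 * y ^ 2 = q * (q * y ^ 2) by ring, e' q (q * y ^ 2), e q, zpow_add₀ h0]
  linear_combination (-(q ^ a * q ^ b) * (x * y)) * this

lemma th_mul {q : ℂ} (h0 : q ≠ 0) (hq : ‖q‖ < 1) {x y : ℂ} (hx : x ≠ 0) (hy : y ≠ 0) :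
    th (x * y) q * th (x / y) q = (qP q q)⁻¹ ^ 2 * (Ph q (-x ^ 2) * Ph q (-(q * y ^ 2))
      - x * y * (Ph q (-(q * x ^ 2)) * Ph q (-(q ^ 2 * y ^ 2)))) := by
  have hxy := mul_ne_zero hx hy
  have hxy' := div_ne_zero hx hy
  have h02 : q ^ 2 ≠ 0 := pow_ne_zero 2 h0
  have hq2 : ‖q ^ 2‖ < 1 := by
    rw [norm_pow]; exact pow_lt_one₀ (norm_nonneg _) hq (by norm_num)
  rw [jtp h0 hq hxy, jtp h0 hq hxy']
  have S1 := qS_summable h0 hq hxy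
  have S2 := qS_summable h0 hq hxy'
  have k1 := tsum_mul_tsum_of_summable_norm S1 S2
  have k2 := summable_mul_of_summable_norm S1 S2
  have hs : ∀ w : ℂ, w ≠ 0 → Summable fun n : ℤ => ‖qS (q ^ 2) n * w ^ n‖ :=
    fun w hw => qS_summable h02 hq2 hw
  have nx : -x ^ 2 ≠ 0 := neg_ne_zero.mpr (pow_ne_zero 2 hx)
  have nx' : -(q * x ^ 2) ≠ 0 := neg_ne_zero.mpr (mul_ne_zero h0 (pow_ne_zero 2 hx))
  have ny : -(q * y ^ 2) ≠ 0 := neg_ne_zero.mpr (mul_ne_zero h0 (pow_ne_zero 2 hy))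
  have ny' : -(q ^ 2 * y ^ 2) ≠ 0 := neg_ne_zero.mpr (mul_ne_zero h02 (pow_ne_zero 2 hy))
  have A := (summable_mul_of_summable_norm (hs _ nx) (hs _ ny)).hasSum
  rw [← tsum_mul_tsum_of_summable_norm (hs _ nx) (hs _ ny)] at A
  have B := (summable_mul_of_summable_norm (hs _ nx') (hs _ ny')).hasSum.mul_left (-(x * y))
  rw [← tsum_mul_tsum_of_summable_norm (hs _ nx') (hs _ ny')] at B
  have C : HasSum ((fun z : ℤ × ℤ =>
      qS q z.1 * (x * y) ^ z.1 * (qS q z.2 * (x / y) ^ z.2)) ∘ evOdd)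
      (Ph q (-x ^ 2) * Ph q (-(q * y ^ 2)) +
        -(x * y) * (Ph q (-(q * x ^ 2)) * Ph q (-(q ^ 2 * y ^ 2)))) := by
    refine HasSum.sum (a := Ph q (-x ^ 2) * Ph q (-(q * y ^ 2)))
      (b := -(x * y) * (Ph q (-(q * x ^ 2)) * Ph q (-(q ^ 2 * y ^ 2)))) ?_ ?_
    · have e : (((fun z : ℤ × ℤ => qS q z.1 * (x * y) ^ z.1 * (qS q z.2 * (x / y) ^ z.2)) ∘ evOdd)
          ∘ Sum.inl) = _ := funext fun p => qS_even h0 hx hy p.1 p.2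
      rw [e]; exact A
    · have e : (((fun z : ℤ × ℤ => qS q z.1 * (x * y) ^ z.1 * (qS q z.2 * (x / y) ^ z.2)) ∘ evOdd)
          ∘ Sum.inr) = _ := funext fun p => qS_odd h0 hx hy p.1 p.2
      rw [e]; exact B
  have C' := (evOdd.hasSum_iff.mp C).tsum_eq
  rw [← k1] at C'
  linear_combination (qP q q)⁻¹ ^ 2 * C'


lemma th_mul' {q : ℂ} (h0 : q ≠ 0) (hq : ‖q‖ < 1) {x y : ℂ} (hx : x ≠ 0) (hy : y ≠ 0) :
    th (x * y) q * th (x / y) q = (qP q q)⁻¹ ^ 2 * x *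
      ((x * Ph q (-(q ^ 2 * x ^ 2))) * Ph q (-(q * y ^ 2))
        - Ph q (-(q * x ^ 2)) * (y * Ph q (-(q ^ 2 * y ^ 2)))) := by
  rw [th_mul h0 hq hx hy, Ph_shift h0 (w := -x ^ 2) (neg_ne_zero.mpr (pow_ne_zero 2 hx)),
    show q ^ 2 * -x ^ 2 = -(q ^ 2 * x ^ 2) by ring]
  ring

lemma three_term {q : ℂ} (h0 : q ≠ 0) (hq : ‖q‖ < 1) {x y u v : ℂ} (hx : x ≠ 0) (hy : y ≠ 0)
    (hu : u ≠ 0) (hv : v ≠ 0) :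
    (th (x * y) q * th (x / y) q) * (th (u * v) q * th (u / v) q) =
      u / y * (th (x * u) q * th (x / u) q) * (th (y * v) q * th (y / v) q) +
      (th (x * v) q * th (x / v) q) * (th (u * y) q * th (u / y) q) := by
  simp only [th_mul' h0 hq hx hy, th_mul' h0 hq hx hu, th_mul' h0 hq hx hv, th_mul' h0 hq hu hv,
    th_mul' h0 hq hu hy, th_mul' h0 hq hy hv]
  field_simp
  ring

lemma th_inv {q : ℂ} (hq : ‖q‖ < 1) {z : ℂ} (hz : z ≠ 0) : th z⁻¹ q = -(z⁻¹) * th z q := by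
  rw [th, th, qP_succ z⁻¹ hq, qP_succ z hq, div_inv_eq_mul, div_eq_mul_inv, mul_comm q z,
    mul_comm q z⁻¹]
  field_simp
  ring

lemma th_refl {q : ℂ} (h0 : q ≠ 0) (z : ℂ) : th (q / z) q = th z q := by
  rw [th, th, div_div_cancel₀ h0, mul_comm]

lemma th_shift {q : ℂ} (h0 : q ≠ 0) (hq : ‖q‖ < 1) {z : ℂ} (hz : z ≠ 0) :
    th (q * z) q = -(z⁻¹) * th z q := by
  rw [← th_inv hq hz, ← th_refl h0 (q * z)]
  congr 1
  field_simp

lemma norm_pow_lt {q : ℂ} (hq : ‖q‖ < 1) {n : ℕ} (hn : n ≠ 0) : ‖q ^ n‖ < 1 := by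
  rw [norm_pow]; exact pow_lt_one₀ (norm_nonneg _) hq hn

lemma inst1 {q : ℂ} (h0 : q ≠ 0) (hq : ‖q‖ < 1) :
    (th (q ^ 2) (q ^ 10) * th (q ^ 4) (q ^ 10)) ^ 2 =
      th (q ^ 1) (q ^ 10) * th (q ^ 3) (q ^ 10) * th (q ^ 5) (q ^ 10) ^ 2
      + q * (th (q ^ 1) (q ^ 10) * th (q ^ 3) (q ^ 10)) ^ 2 := by
  have hp : ∀ n : ℕ, q ^ n ≠ 0 := fun n => pow_ne_zero n h0
  have H0 := hp 10
  have Hq := norm_pow_lt hq (n := 10) (by norm_num)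
  have T := three_term H0 Hq (hp 4) one_ne_zero (hp 7) (hp 5)
  have a1 : th (q ^ 7 * q ^ 5) (q ^ 10) = -(q ^ 2)⁻¹ * th (q ^ 2) (q ^ 10) := by
    rw [← th_shift H0 Hq (hp 2)]; congr 1; ring
  have a2 : th (q ^ 7 / q ^ 5) (q ^ 10) = th (q ^ 2) (q ^ 10) := by
    congr 1; field_simp
  have a3 : th (q ^ 4 * q ^ 7) (q ^ 10) = -(q ^ 1)⁻¹ * th (q ^ 1) (q ^ 10) := by
    rw [← th_shift H0 Hq (hp 1)]; congr 1; ring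
  have a4 : th (q ^ 4 / q ^ 7) (q ^ 10) = -(q ^ 3)⁻¹ * th (q ^ 3) (q ^ 10) := by
    rw [← th_inv Hq (hp 3)]; congr 1; field_simp
  have a5 : th (1 / q ^ 5) (q ^ 10) = -(q ^ 5)⁻¹ * th (q ^ 5) (q ^ 10) := by
    rw [← th_inv Hq (hp 5), one_div]
  have a6 : th (q ^ 4 * q ^ 5) (q ^ 10) = th (q ^ 1) (q ^ 10) := by
    rw [← th_refl H0 (q ^ 1)]; congr 1; field_simp
  have a7 : th (q ^ 4 / q ^ 5) (q ^ 10) = -(q ^ 1)⁻¹ * th (q ^ 1) (q ^ 10) := by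
    rw [← th_inv Hq (hp 1)]; congr 1; field_simp
  have a8 : th (q ^ 7) (q ^ 10) = th (q ^ 3) (q ^ 10) := by
    rw [← th_refl H0 (q ^ 3)]; congr 1; field_simp
  simp only [mul_one, one_mul, div_one] at T
  rw [a1, a2, a3, a4, a5, a6, a7, a8] at T
  field_simp at T
  rw [pow_one] at *
  linear_combination -T

lemma inst4 {q : ℂ} (h0 : q ≠ 0) (hq : ‖q‖ < 1) :
    (th (q ^ 3) (q ^ 10) * th (q ^ 4) (q ^ 10)) ^ 2 =
      th (q ^ 2) (q ^ 10) * th (q ^ 4) (q ^ 10) * th (q ^ 5) (q ^ 10) ^ 2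
      + q ^ 2 * (th (q ^ 1) (q ^ 10) * th (q ^ 2) (q ^ 10)) ^ 2 := by
  have hp : ∀ n : ℕ, q ^ n ≠ 0 := fun n => pow_ne_zero n h0
  have H0 := hp 10
  have Hq := norm_pow_lt hq (n := 10) (by norm_num)
  have T := three_term H0 Hq (hp 4) one_ne_zero (hp 8) (hp 5)
  have a1 : th (q ^ 8 * q ^ 5) (q ^ 10) = -(q ^ 3)⁻¹ * th (q ^ 3) (q ^ 10) := by
    rw [← th_shift H0 Hq (hp 3)]; congr 1; ring
  have a2 : th (q ^ 8 / q ^ 5) (q ^ 10) = th (q ^ 3) (q ^ 10) := by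
    congr 1; field_simp
  have a3 : th (q ^ 4 * q ^ 8) (q ^ 10) = -(q ^ 2)⁻¹ * th (q ^ 2) (q ^ 10) := by
    rw [← th_shift H0 Hq (hp 2)]; congr 1; ring
  have a4 : th (q ^ 4 / q ^ 8) (q ^ 10) = -(q ^ 4)⁻¹ * th (q ^ 4) (q ^ 10) := by
    rw [← th_inv Hq (hp 4)]; congr 1; field_simp
  have a5 : th (1 / q ^ 5) (q ^ 10) = -(q ^ 5)⁻¹ * th (q ^ 5) (q ^ 10) := by
    rw [← th_inv Hq (hp 5), one_div]
  have a6 : th (q ^ 4 * q ^ 5) (q ^ 10) = th (q ^ 1) (q ^ 10) := by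
    rw [← th_refl H0 (q ^ 1)]; congr 1; field_simp
  have a7 : th (q ^ 4 / q ^ 5) (q ^ 10) = -(q ^ 1)⁻¹ * th (q ^ 1) (q ^ 10) := by
    rw [← th_inv Hq (hp 1)]; congr 1; field_simp
  have a8 : th (q ^ 8) (q ^ 10) = th (q ^ 2) (q ^ 10) := by
    rw [← th_refl H0 (q ^ 2)]; congr 1; field_simp
  simp only [mul_one, one_mul, div_one] at T
  rw [a1, a2, a3, a4, a5, a6, a7, a8] at T
  field_simp at T
  rw [pow_one] at *
  linear_combination -T

lemma inst2 {q : ℂ} (h0 : q ≠ 0) (hq : ‖q‖ < 1) :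
    (th (-q ^ 1) (q ^ 5) * th (-q ^ 2) (q ^ 5)) ^ 2 =
      (th (q ^ 1) (q ^ 5) * th (q ^ 2) (q ^ 5)) ^ 2
      + q * (th (-q ^ 1) (q ^ 5) * th (-q ^ 2) (q ^ 5)) * th (-1) (q ^ 5) ^ 2 := by
  have hp : ∀ n : ℕ, q ^ n ≠ 0 := fun n => pow_ne_zero n h0
  have hm : ∀ n : ℕ, -q ^ n ≠ 0 := fun n => neg_ne_zero.mpr (hp n)
  have H0 := hp 5
  have Hq := norm_pow_lt hq (n := 5) (by norm_num)
  have T := three_term H0 Hq (hp 4) one_ne_zero (hm 7) (hm 5)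
  have a0 : th (q ^ 4) (q ^ 5) = th (q ^ 1) (q ^ 5) := by
    rw [← th_refl H0 (q ^ 1)]; congr 1; field_simp
  have a1 : th (-q ^ 7 * -q ^ 5) (q ^ 5) = -(q ^ 7)⁻¹ * (-(q ^ 2)⁻¹ * th (q ^ 2) (q ^ 5)) := by
    rw [← th_shift H0 Hq (hp 2), ← pow_add, ← th_shift H0 Hq (hp 7)]; congr 1; ring
  have a2 : th (-q ^ 7 / -q ^ 5) (q ^ 5) = th (q ^ 2) (q ^ 5) := by
    congr 1; field_simp
  have a3 : th (q ^ 4 * -q ^ 7) (q ^ 5) = -(-q ^ 6)⁻¹ * (-(-q ^ 1)⁻¹ * th (-q ^ 1) (q ^ 5)) := by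
    rw [← th_shift H0 Hq (hm 1), show q ^ 5 * -q ^ 1 = -q ^ 6 by ring, ← th_shift H0 Hq (hm 6)]
    congr 1; ring
  have a8' : th (-q ^ 3) (q ^ 5) = th (-q ^ 2) (q ^ 5) := by
    rw [← th_refl H0 (-q ^ 2)]; congr 1; field_simp
  have a4 : th (q ^ 4 / -q ^ 7) (q ^ 5) = -(-q ^ 3)⁻¹ * th (-q ^ 2) (q ^ 5) := by
    rw [← a8', ← th_inv Hq (hm 3)]; congr 1; field_simp
  have a5' : th (-q ^ 5) (q ^ 5) = th (-1) (q ^ 5) := by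
    rw [← th_refl H0 (-1)]; congr 1; ring
  have a5 : th (1 / -q ^ 5) (q ^ 5) = -(-q ^ 5)⁻¹ * th (-1) (q ^ 5) := by
    rw [← a5', ← th_inv Hq (hm 5), one_div]
  have a6' : th (-q ^ 4) (q ^ 5) = th (-q ^ 1) (q ^ 5) := by
    rw [← th_refl H0 (-q ^ 1)]; congr 1; field_simp
  have a6 : th (q ^ 4 * -q ^ 5) (q ^ 5) = -(-q ^ 4)⁻¹ * th (-q ^ 1) (q ^ 5) := by
    rw [← a6', ← th_shift H0 Hq (hm 4)]; congr 1; ring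
  have a7 : th (q ^ 4 / -q ^ 5) (q ^ 5) = -(-q ^ 1)⁻¹ * th (-q ^ 1) (q ^ 5) := by
    rw [← th_inv Hq (hm 1)]; congr 1; field_simp
  have a8 : th (-q ^ 7) (q ^ 5) = -(-q ^ 2)⁻¹ * th (-q ^ 2) (q ^ 5) := by
    rw [← th_shift H0 Hq (hm 2)]; congr 1; ring
  simp only [mul_one, one_mul, div_one] at T
  rw [a0, a1, a2, a3, a4, a5, a5', a6, a7, a8] at T
  field_simp at T
  rw [pow_one] at *
  linear_combination -T

lemma qP_five_one {q : ℂ} (hq : ‖q‖ < 1) (h0 : q ≠ 0) :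
    th (q ^ 1) (q ^ 5) * th (q ^ 2) (q ^ 5) * qP (q ^ 5) (q ^ 5) = qP q q := by
  rw [qP_split q hq 5]
  simp only [Finset.prod_range_succ, Finset.prod_range_zero, th]
  rw [show q ^ 5 / q ^ 1 = q ^ 4 by field_simp, show q ^ 5 / q ^ 2 = q ^ 3 by field_simp]
  ring_nf

lemma qP_five_neg {q : ℂ} (hq : ‖q‖ < 1) (h0 : q ≠ 0) :
    th (-q ^ 1) (q ^ 5) * th (-q ^ 2) (q ^ 5) * qP (-q ^ 5) (q ^ 5) = qP (-q) q := by
  rw [qP_split (-q) hq 5]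
  simp only [Finset.prod_range_succ, Finset.prod_range_zero, th]
  rw [show q ^ 5 / -q ^ 1 = -q ^ 4 by field_simp, show q ^ 5 / -q ^ 2 = -q ^ 3 by field_simp]
  ring_nf

lemma qP_neg_eq {q : ℂ} (hq : ‖q‖ < 1) : qP (-q) q = qP (q ^ 2) (q ^ 2) / qP q q := by
  rw [eq_div_iff (qP_ne_zero' hq hq), mul_comm]; exact qP_neg q hq

lemma alg2 {q : ℂ} (h0 : q ≠ 0) (hq : ‖q‖ < 1) :
    qP (q ^ 2) (q ^ 2) ^ 2 * qP (q ^ 5) (q ^ 5) ^ 5 =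
      qP (q ^ 1) (q ^ 1) ^ 4 * qP (q ^ 5) (q ^ 5) * qP (q ^ 10) (q ^ 10) ^ 2
      + 4 * q * qP (q ^ 1) (q ^ 1) * qP (q ^ 2) (q ^ 2) * qP (q ^ 10) (q ^ 10) ^ 5 := by
  have hn : ∀ n : ℕ, n ≠ 0 → qP (q ^ n) (q ^ n) ≠ 0 := fun n hn =>
    qP_ne_zero' (norm_pow_lt hq hn) (norm_pow_lt hq hn)
  have n1 := hn 1 (by norm_num)
  have n2 := hn 2 (by norm_num)
  have n5 := hn 5 (by norm_num)
  have n10 := hn 10 (by norm_num)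
  have Hq := norm_pow_lt hq (n := 5) (by norm_num)
  have T := inst2 h0 hq
  have e1 := qP_five_one hq h0
  have e2 := qP_five_neg hq h0
  have e3 : qP (-q ^ 5) (q ^ 5) = qP (q ^ 10) (q ^ 10) / qP (q ^ 5) (q ^ 5) := by
    rw [qP_neg_eq Hq, ← pow_mul]
  rw [e3, qP_neg_eq hq] at e2
  have e5 : th (-1) (q ^ 5) = 2 * (qP (q ^ 10) (q ^ 10) / qP (q ^ 5) (q ^ 5)) ^ 2 := by
    rw [th, qP_succ (-1) Hq, show -1 * q ^ 5 = -q ^ 5 by ring,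
      show q ^ 5 / -1 = -q ^ 5 by ring, e3]; ring
  rw [e5, eq_div_of_mul_eq n5 e1, eq_div_of_mul_eq (div_ne_zero n10 n5) e2] at T
  rw [pow_one q] at *
  generalize qP q q = E1 at *
  generalize qP (q ^ 2) (q ^ 2) = E2 at *
  generalize qP (q ^ 5) (q ^ 5) = E5 at *
  generalize qP (q ^ 10) (q ^ 10) = E10 at *
  clear e1 e2 e3 e5
  field_simp at T
  linear_combination T

/-- Complex version of Ramanujan's level-10 function. -/
noncomputable def cK (q : ℂ) : ℂ := q * (th (q ^ 1) (q ^ 10) * th (q ^ 2) (q ^ 10)) /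
    (th (q ^ 3) (q ^ 10) * th (q ^ 4) (q ^ 10))

lemma algs {q : ℂ} (h0 : q ≠ 0) (hq : ‖q‖ < 1) :
    cK q ≠ 0 ∧
    (1 + cK q - cK q ^ 2) * (q * qP (q ^ 10) (q ^ 10) ^ 4 * qP (q ^ 1) (q ^ 1) ^ 2)
      = cK q * (qP (q ^ 2) (q ^ 2) ^ 4 * qP (q ^ 5) (q ^ 5) ^ 2) ∧
    (1 - 4 * cK q - cK q ^ 2) * (q * qP (q ^ 10) (q ^ 10) ^ 3 * qP (q ^ 2) (q ^ 2))
      = cK q * (qP (q ^ 5) (q ^ 5) * qP (q ^ 1) (q ^ 1) ^ 3) := by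
  have Hq := norm_pow_lt hq (n := 10) (by norm_num)
  have hg : ∀ n : ℕ, n ≠ 0 → qP (q ^ n) (q ^ 10) ≠ 0 := fun n hn =>
    qP_ne_zero' Hq (norm_pow_lt hq hn)
  have n1 := hg 1 (by norm_num)
  have n2 := hg 2 (by norm_num)
  have n3 := hg 3 (by norm_num)
  have n4 := hg 4 (by norm_num)
  have n5 := hg 5 (by norm_num)
  have n6 := hg 6 (by norm_num)
  have n7 := hg 7 (by norm_num)
  have n8 := hg 8 (by norm_num)
  have n9 := hg 9 (by norm_num)
  have n10 := hg 10 (by norm_num)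
  have A2 := alg2 h0 hq
  have I1 := inst1 h0 hq
  have I4 := inst4 h0 hq
  have t1 : th (q ^ 1) (q ^ 10) = qP (q ^ 1) (q ^ 10) * qP (q ^ 9) (q ^ 10) := by
    rw [th]; congr 2; field_simp
  have t2 : th (q ^ 2) (q ^ 10) = qP (q ^ 2) (q ^ 10) * qP (q ^ 8) (q ^ 10) := by
    rw [th]; congr 2; field_simp
  have t3 : th (q ^ 3) (q ^ 10) = qP (q ^ 3) (q ^ 10) * qP (q ^ 7) (q ^ 10) := by
    rw [th]; congr 2; field_simp
  have t4 : th (q ^ 4) (q ^ 10) = qP (q ^ 4) (q ^ 10) * qP (q ^ 6) (q ^ 10) := by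
    rw [th]; congr 2; field_simp
  have t5 : th (q ^ 5) (q ^ 10) = qP (q ^ 5) (q ^ 10) * qP (q ^ 5) (q ^ 10) := by
    rw [th]; congr 2; field_simp
  have s1 : qP (q ^ 1) (q ^ 1) = qP (q ^ 1) (q ^ 10) * qP (q ^ 2) (q ^ 10) * qP (q ^ 3) (q ^ 10) *
      qP (q ^ 4) (q ^ 10) * qP (q ^ 5) (q ^ 10) * qP (q ^ 6) (q ^ 10) * qP (q ^ 7) (q ^ 10) *
      qP (q ^ 8) (q ^ 10) * qP (q ^ 9) (q ^ 10) * qP (q ^ 10) (q ^ 10) := by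
    rw [pow_one, qP_split q hq 10]
    simp only [Finset.prod_range_succ, Finset.prod_range_zero, ← pow_succ', one_mul, pow_zero,
      mul_one]
    norm_num
  have s2 : qP (q ^ 2) (q ^ 2) = qP (q ^ 2) (q ^ 10) *
      qP (q ^ 4) (q ^ 10) * qP (q ^ 6) (q ^ 10) *
      qP (q ^ 8) (q ^ 10) * qP (q ^ 10) (q ^ 10) := by
    rw [qP_split (q ^ 2) (norm_pow_lt hq (by norm_num)) 5]
    simp only [Finset.prod_range_succ, Finset.prod_range_zero, ← pow_mul, ← pow_add, one_mul]
  have s5 : qP (q ^ 5) (q ^ 5) = qP (q ^ 5) (q ^ 10) * qP (q ^ 10) (q ^ 10) := by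
    rw [qP_split (q ^ 5) (norm_pow_lt hq (by norm_num)) 2]
    simp only [Finset.prod_range_succ, Finset.prod_range_zero, ← pow_mul, ← pow_add, one_mul]
  rw [cK, t1, t2, t3, t4]
  rw [t1, t2, t3, t4, t5] at I1
  rw [t1, t2, t3, t4, t5] at I4
  rw [s1, s2, s5] at A2 ⊢
  clear t1 t2 t3 t4 t5 s1 s2 s5 hg
  generalize qP (q ^ 1) (q ^ 10) = g1 at *
  generalize qP (q ^ 2) (q ^ 10) = g2 at *
  generalize qP (q ^ 3) (q ^ 10) = g3 at *
  generalize qP (q ^ 4) (q ^ 10) = g4 at *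
  generalize qP (q ^ 5) (q ^ 10) = g5 at *
  generalize qP (q ^ 6) (q ^ 10) = g6 at *
  generalize qP (q ^ 7) (q ^ 10) = g7 at *
  generalize qP (q ^ 8) (q ^ 10) = g8 at *
  generalize qP (q ^ 9) (q ^ 10) = g9 at *
  generalize qP (q ^ 10) (q ^ 10) = g10 at *
  obtain ⟨k, hk⟩ : ∃ k, k = q * (g1 * g9 * (g2 * g8)) / (g3 * g7 * (g4 * g6)) := ⟨_, rfl⟩
  rw [← hk]
  have hk0 : k ≠ 0 := by
    rw [hk]; simp [h0, n1, n2, n3, n4, n6, n7, n8, n9]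
  have hk1 : k * (g3 * g7 * (g4 * g6)) = q * (g1 * g9 * (g2 * g8)) := by
    rw [hk]; field_simp
  clear hk
  have hk2 : (1 - k ^ 2) * (g3 * g7) ^ 2 * (g4 * g6) = g2 * g8 * g5 ^ 4 := by
    have : g4 * g6 ≠ 0 := mul_ne_zero n4 n6
    apply mul_right_cancel₀ this
    linear_combination I4 - (k * (g3 * g7 * (g4 * g6)) + q * (g1 * g9 * (g2 * g8))) * hk1
  have A2s : g5 ^ 4 = (g2 * g4 * g6 * g8) ^ 2 * (g1 * g3 * g7 * g9) ^ 4 * g5 ^ 4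
      + 4 * q * (g1 * g3 * g7 * g9) := by
    have : (g2 * g4 * g6 * g8) ^ 2 * g5 * g10 ^ 7 ≠ 0 := by
      simp [n2, n4, n5, n6, n8, n10]
    apply mul_right_cancel₀ this
    linear_combination A2
  refine ⟨hk0, ?_, ?_⟩
  · have : (g1 * g9 * (g3 * g7)) * ((g3 * g7) ^ 2 * (g4 * g6)) ≠ 0 := by
      simp [n1, n3, n4, n6, n7, n9]
    apply mul_right_cancel₀ this
    have hk3 : (1 + k - k ^ 2) * ((g1 * g9 * (g3 * g7)) * ((g3 * g7) ^ 2 * (g4 * g6)))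
        = (g2 * g8) ^ 3 * (g4 * g6) ^ 2 := by
      linear_combination (g1 * g9 * (g3 * g7)) * hk2 + (g1 * g9 * (g3 * g7)) * (g3 * g7) * hk1
        - (g2 * g8) * I1
    linear_combination (q * g10 ^ 4 * (g1 * g2 * g3 * g4 * g5 * g6 * g7 * g8 * g9 * g10) ^ 2) * hk3
      - (g2 * g4 * g6 * g8 * g10) ^ 4 * (g5 * g10) ^ 2 * (g1 * g9) * (g3 * g7) ^ 2 * hk1
  · have : (g3 * g7) ^ 2 * (g4 * g6) ≠ 0 := by
      simp [n3, n4, n6, n7]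
    apply mul_right_cancel₀ this
    have hk3 : (1 - 4 * k - k ^ 2) * ((g3 * g7) ^ 2 * (g4 * g6))
        = (g2 * g8) * ((g2 * g4 * g6 * g8) ^ 2 * (g1 * g3 * g7 * g9) ^ 4 * g5 ^ 4) := by
      linear_combination hk2 - 4 * (g3 * g7) * hk1 + (g2 * g8) * A2s
    linear_combination (q * g10 ^ 3 * (g2 * g4 * g6 * g8 * g10)) * hk3
      - (g5 * g10 * (g1 * g2 * g3 * g4 * g5 * g6 * g7 * g8 * g9 * g10) ^ 3) * (g3 * g7) * hk1


noncomputable def wt (z q : ℂ) (n : ℕ) : ℂ := z * q ^ n / (1 - z * q ^ n) ^ 2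
noncomputable def Vp (z q s : ℂ) : ℂ := ∏' n : ℕ, (1 + -(s * wt z q n))

open Filter Topology in
lemma wt_summable (z : ℂ) {q : ℂ} (hq : ‖q‖ < 1) : Summable fun n => ‖wt z q n‖ := by
  have h1 : Tendsto (fun n : ℕ => ((1 - z * q ^ n) ^ 2)⁻¹) atTop (𝓝 ((1 - z * 0) ^ 2)⁻¹) := by
    refine Tendsto.inv₀ ?_ (by simp)
    exact (((tendsto_pow_atTop_nhds_zero_of_norm_lt_one hq).const_mul z).const_sub 1).pow 2
  obtain ⟨C, hC⟩ := (Metric.isBounded_range_of_tendsto _ h1).exists_norm_le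
  refine Summable.of_nonneg_of_le (fun _ => norm_nonneg _) (fun n => ?_)
    ((summable_geometric_of_lt_one (norm_nonneg q) hq).mul_left (‖z‖ * C))
  rw [wt, div_eq_mul_inv, norm_mul, norm_mul, norm_pow]
  have := hC _ ⟨n, rfl⟩
  calc ‖z‖ * ‖q‖ ^ n * ‖((1 - z * q ^ n) ^ 2)⁻¹‖ ≤ ‖z‖ * ‖q‖ ^ n * C := by gcongr
    _ = _ := by ring

lemma Vp_mult (z s : ℂ) {q : ℂ} (hq : ‖q‖ < 1) :
    Multipliable fun n : ℕ => (1 + -(s * wt z q n)) := by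
  refine multipliable_one_add_of_summable ?_
  simpa using (wt_summable z hq).mul_left ‖s‖

lemma Vp_zero (z q : ℂ) : Vp z q 0 = 1 := by simp [Vp]

lemma Vp_deriv (z : ℂ) {q : ℂ} (hq : ‖q‖ < 1) :
    HasDerivAt (Vp z q) (-∑' n, wt z q n) 0 := by
  have hd : ∀ (n : ℕ) (s : ℂ), HasDerivAt (fun s : ℂ => -(s * wt z q n)) (-wt z q n) s := fun n s => by
    simpa using ((hasDerivAt_id' s).mul_const (wt z q n)).fun_neg
  obtain ⟨D, h1, h2⟩ := prod_deriv (f := fun n s => -(s * wt z q n)) (U := Metric.ball 0 1)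
    Metric.isOpen_ball (x := 0) (by simp)
    (fun n s _ => (hd n s).differentiableAt.differentiableWithinAt) (wt_summable z hq)
    (fun n s hs => by
      simp only [Metric.mem_ball, dist_zero_right] at hs
      rw [norm_neg, norm_mul]
      exact mul_le_of_le_one_left (norm_nonneg _) hs.le) (fun n => by simp)
  simp only [(hd _ 0).deriv, zero_mul, neg_zero, add_zero, div_one, tprod_one, one_mul] at h1 h2
  rw [← tsum_neg, h1.tsum_eq]
  exact h2

lemma qP_pair {z q y : ℂ} (hq : ‖q‖ < 1) (hy : y ≠ 0) (hz : ∀ n : ℕ, z * q ^ n ≠ 1) :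
    qP (z * y) q * qP (z / y) q = qP z q ^ 2 * Vp z q (y + y⁻¹ - 2) := by
  rw [qP, qP, ← (qP_mult _ hq).tprod_mul (qP_mult _ hq), pow_two, qP, Vp,
    ← (qP_mult _ hq).tprod_mul (qP_mult _ hq),
    ← ((qP_mult _ hq).mul (qP_mult _ hq)).tprod_mul (Vp_mult z _ hq)]
  refine tprod_congr fun n => ?_
  have : 1 - z * q ^ n ≠ 0 := sub_ne_zero.mpr (hz n).symm
  rw [wt]
  field_simp
  ring

lemma exists_y (s : ℂ) : ∃ y : ℂ, y ≠ 0 ∧ y + y⁻¹ - 2 = s := by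
  obtain ⟨r, hr⟩ := IsAlgClosed.exists_eq_mul_self ((s + 2) ^ 2 - 4)
  have h : ((s + 2) + r) / 2 * (((s + 2) - r) / 2) = 1 := by linear_combination hr / 4
  have h0 : ((s + 2) + r) / 2 ≠ 0 := left_ne_zero_of_mul_eq_one h
  refine ⟨_, h0, ?_⟩
  rw [inv_eq_of_mul_eq_one_right h]
  ring

noncomputable def St (z q : ℂ) : ℂ := ∑' n, wt z q n

lemma W_ident {q : ℂ} (h0 : q ≠ 0) (hq : ‖q‖ < 1) {x u : ℂ} (hx : x ≠ 0) (hu : u ≠ 0)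
    (hx1 : ∀ n : ℕ, x * q ^ n ≠ 1) (hx2 : ∀ n : ℕ, q / x * q ^ n ≠ 1)
    (hu1 : ∀ n : ℕ, u * q ^ n ≠ 1) (hu2 : ∀ n : ℕ, q / u * q ^ n ≠ 1) :
    (th x q * th u q) ^ 2 * ((St u q + St (q / u) q) - (St x q + St (q / x) q)) =
      u * (th (x * u) q * th (x / u) q) * qP q q ^ 4 := by
  have hq1 : ∀ n : ℕ, q * q ^ n ≠ 1 := fun n h => by
    have := norm_pow_lt hq (n := n + 1) (by omega)
    rw [pow_succ', h] at this; simp at this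
  have pair : ∀ {z y : ℂ}, z ≠ 0 → y ≠ 0 → (∀ n : ℕ, z * q ^ n ≠ 1) →
      (∀ n : ℕ, q / z * q ^ n ≠ 1) → th (z * y) q * th (z / y) q =
      th z q ^ 2 * (Vp z q (y + y⁻¹ - 2) * Vp (q / z) q (y + y⁻¹ - 2)) := by
    intro z y hz hy h1 h2
    have p1 := qP_pair hq hy h1
    have p2 := qP_pair hq hy h2
    rw [th, th, th, show q / (z * y) = q / z / y by rw [div_div],
      show q / (z / y) = q / z * y by field_simp]
    linear_combination (qP (q / z * y) q * qP (q / z / y) q) * p1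
      + qP z q ^ 2 * Vp z q (y + y⁻¹ - 2) * p2
  have key : ∀ s : ℂ, (th x q * th u q) ^ 2 * (Vp x q s * Vp (q / x) q s - Vp u q s * Vp (q / u) q s)
      = u * (th (x * u) q * th (x / u) q) * qP q q ^ 4 * (s * Vp q q s ^ 2) := by
    intro s
    obtain ⟨y, hy, rfl⟩ := exists_y s
    have T := three_term h0 hq hx hy hu one_ne_zero
    have P3 := qP_pair hq hy hq1
    have ty : th y q ^ 2 / y = (y + y⁻¹ - 2) * (qP q q ^ 2 * Vp q q (y + y⁻¹ - 2)) ^ 2 := by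
      rw [← P3, th, qP_succ y hq, mul_comm q y]
      field_simp
      ring
    rw [pair hx hy hx1 hx2, pair hu hy hu1 hu2] at T
    simp only [mul_one, div_one] at T
    linear_combination T + u * (th (x * u) q * th (x / u) q) * ty
  have L : HasDerivAt (fun s : ℂ => (th x q * th u q) ^ 2 *
      (Vp x q s * Vp (q / x) q s - Vp u q s * Vp (q / u) q s)) _ 0 :=
    ((((Vp_deriv x hq).fun_mul (Vp_deriv (q / x) hq)).fun_sub
      ((Vp_deriv u hq).fun_mul (Vp_deriv (q / u) hq))).const_mul _)
  have R : HasDerivAt (fun s : ℂ => u * (th (x * u) q * th (x / u) q) * qP q q ^ 4 *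
      (s * Vp q q s ^ 2)) _ 0 :=
    (((hasDerivAt_id' (0 : ℂ)).fun_mul ((Vp_deriv q hq).fun_pow 2)).const_mul _)
  rw [funext key] at L
  have := L.unique R
  simp only [Vp_zero] at this
  unfold St
  linear_combination this


lemma St_succ {z q : ℂ} (hq : ‖q‖ < 1) : St z q = z / (1 - z) ^ 2 + St (z * q) q := by
  rw [St, (wt_summable z hq).of_norm.tsum_eq_zero_add, St]
  simp [wt, pow_succ', mul_assoc]

lemma wt_expand {z q : ℂ} (hz : ‖z‖ = 1) (hq : ‖q‖ < 1) (n : ℕ) :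
    wt (z * q) q n = ∑' m : ℕ, (m : ℂ) * (z ^ m * q ^ ((n + 1) * m)) := by
  have h : ‖z * q * q ^ n‖ < 1 := by
    rw [mul_assoc, ← pow_succ', norm_mul, hz, one_mul]; exact norm_pow_lt hq (by omega)
  rw [wt, ← tsum_coe_mul_geometric_of_norm_lt_one h]
  refine tsum_congr fun m => ?_
  rw [mul_assoc z, ← pow_succ', mul_pow, ← pow_mul]

lemma dbl_summable {q : ℂ} (hq : ‖q‖ < 1) {c : ℕ → ℂ} (hc : ∀ m, ‖c m‖ ≤ 1) :
    Summable fun p : ℕ × ℕ => (p.2 : ℂ) * (c p.2 * q ^ ((p.1 + 1) * p.2)) := by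
  have h1 := summable_geometric_of_lt_one (norm_nonneg q) hq
  have h2 : Summable fun m : ℕ => (m : ℝ) * ‖q‖ ^ m := by
    simpa using summable_pow_mul_geometric_of_norm_lt_one 1 (r := ‖q‖) (by simpa using hq)
  have h3 := h1.mul_of_nonneg h2 (fun _ => by positivity) (fun _ => by positivity)
  refine Summable.of_norm_bounded h3 fun p => ?_
  rw [norm_mul, norm_mul, norm_pow, Complex.norm_natCast]
  rcases Nat.eq_zero_or_pos p.2 with h | h
  · simp [h]
  · have e : p.1 + p.2 ≤ (p.1 + 1) * p.2 := by nlinarith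
    have b : ‖q‖ ^ ((p.1 + 1) * p.2) ≤ ‖q‖ ^ p.1 * ‖q‖ ^ p.2 := by
      rw [← pow_add]; exact pow_le_pow_of_le_one (norm_nonneg _) hq.le e
    calc (p.2 : ℝ) * (‖c p.2‖ * ‖q‖ ^ ((p.1 + 1) * p.2)) ≤
        (p.2 : ℝ) * (1 * (‖q‖ ^ p.1 * ‖q‖ ^ p.2)) := by gcongr; exact hc _
      _ = _ := by ring

noncomputable def Dbl (q : ℂ) (c : ℕ → ℂ) : ℂ :=
  ∑' p : ℕ × ℕ, (p.2 : ℂ) * (c p.2 * q ^ ((p.1 + 1) * p.2))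

lemma St_dbl {z q : ℂ} (hz : ‖z‖ = 1) (hq : ‖q‖ < 1) : St (z * q) q = Dbl q (fun m => z ^ m) := by
  rw [St, Dbl, (dbl_summable hq (c := fun m => z ^ m) (fun m => by simp [hz])).tsum_prod]
  exact tsum_congr fun n => wt_expand hz hq n

lemma Dbl_swap {q : ℂ} (hq : ‖q‖ < 1) {c : ℕ → ℂ} (hc : ∀ m, ‖c m‖ ≤ 1) :
    HasSum (fun m : ℕ => c m * (m * q ^ m / (1 - q ^ m))) (Dbl q c) := by
  have h := dbl_summable hq hc
  have h' := ((Equiv.prodComm ℕ ℕ).hasSum_iff.mpr h.hasSum)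
  refine h'.prod_fiberwise fun m => ?_
  rcases Nat.eq_zero_or_pos m with hm | hm
  · subst hm; simpa using hasSum_zero
  · have g := hasSum_geometric_of_norm_lt_one (norm_pow_lt hq (n := m) (by omega))
    have e : (fun n : ℕ => ((fun p : ℕ × ℕ => (p.2 : ℂ) * (c p.2 * q ^ ((p.1 + 1) * p.2))) ∘
        ⇑(Equiv.prodComm ℕ ℕ)) (m, n)) = fun n => c m * (m * q ^ m) * (q ^ m) ^ n := by
      ext n
      show (m : ℂ) * (c m * q ^ ((n + 1) * m)) = _
      ring
    rw [e, ← mul_div_assoc, div_eq_mul_inv]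
    exact g.mul_left (c m * (m * q ^ m))

/-- The character-like coefficients. -/
def cc (m : ℕ) : ℂ :=
  if m % 10 = 1 ∨ m % 10 = 2 ∨ m % 10 = 8 ∨ m % 10 = 9 then 1
  else if m % 10 = 3 ∨ m % 10 = 4 ∨ m % 10 = 6 ∨ m % 10 = 7 then -1 else 0

lemma cc_bound (m : ℕ) : ‖cc m‖ ≤ 1 := by
  unfold cc; split_ifs <;> simp

lemma cc_zeta {z : ℂ} (hz : 1 + z + z ^ 2 + z ^ 3 + z ^ 4 = 0) (m : ℕ) :
    (-z ^ 2) ^ m + (-z ^ 3) ^ m - (-z) ^ m - (-z ^ 4) ^ m = (z + z ^ 4 - z ^ 2 - z ^ 3) * cc m := by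
  have h5 : z ^ 5 = 1 := by linear_combination (z - 1) * hz
  have h10 : ∀ a : ℕ, ((-z ^ a) ^ 10) = 1 := fun a => by
    rw [Even.neg_pow (by decide), ← pow_mul, show a * 10 = 5 * (2 * a) by ring, pow_mul, h5, one_pow]
  have red : ∀ n : ℕ, z ^ n = z ^ (n % 5) := fun n => by
    conv_lhs => rw [← Nat.div_add_mod n 5, pow_add, pow_mul, h5, one_pow, one_mul]
  have hp : ∀ a, (-z ^ a) ^ m = (-1) ^ (m % 10) * z ^ ((a * (m % 10)) % 5) := fun a => by
    conv_lhs => rw [← Nat.div_add_mod m 10, pow_add, pow_mul, h10, one_pow, one_mul,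
      neg_pow, ← pow_mul, red]
  have h1 := hp 1
  rw [pow_one] at h1
  rw [hp 2, hp 3, hp 4, h1]
  have hm : m % 10 < 10 := Nat.mod_lt _ (by norm_num)
  unfold cc
  generalize m % 10 = r at hm
  interval_cases r <;> norm_num <;> ring

lemma Dbl_lin {q : ℂ} (hq : ‖q‖ < 1) {z : ℂ} (hz : 1 + z + z ^ 2 + z ^ 3 + z ^ 4 = 0)
    (hz1 : ‖z‖ = 1) :
    St (-z ^ 2 * q) q + St (-z ^ 3 * q) q - St (-z * q) q - St (-z ^ 4 * q) q =
      (z + z ^ 4 - z ^ 2 - z ^ 3) * Dbl q cc := by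
  have hn : ∀ a : ℕ, ‖-z ^ a‖ = 1 := fun a => by simp [hz1]
  have hn1 : ‖-z‖ = 1 := by simp [hz1]
  rw [St_dbl (hn 2) hq, St_dbl (hn 3) hq, St_dbl (hn 4) hq, St_dbl hn1 hq]
  have S : ∀ w : ℂ, ‖w‖ = 1 → HasSum _ (Dbl q fun m => w ^ m) := fun w hw =>
    (dbl_summable hq (c := fun m => w ^ m) (fun m => by simp [hw])).hasSum
  have T := (((S _ (hn 2)).add (S _ (hn 3))).sub (S _ hn1)).sub (S _ (hn 4))
  have C := (dbl_summable hq cc_bound).hasSum.mul_left (z + z ^ 4 - z ^ 2 - z ^ 3)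
  refine T.unique ((congrArg (fun f => HasSum f _) (funext fun p => ?_)).mpr C)
  have := cc_zeta hz p.2
  linear_combination (p.2 : ℂ) * q ^ ((p.1 + 1) * p.2) * this

lemma qP_root {z q : ℂ} (hq : ‖q‖ < 1) (hz : 1 + z + z ^ 2 + z ^ 3 + z ^ 4 = 0) (w : ℂ) :
    qP w q * qP (z * w) q * qP (z ^ 2 * w) q * qP (z ^ 3 * w) q * qP (z ^ 4 * w) q =
      qP (w ^ 5) (q ^ 5) := by
  have h5 : z ^ 5 = 1 := by linear_combination (z - 1) * hz
  have key : ∀ t : ℂ, (1 - t) * (1 - z * t) * (1 - z ^ 2 * t) * (1 - z ^ 3 * t) * (1 - z ^ 4 * t) =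
      1 - t ^ 5 := by
    intro t
    have e1 : (1 - z * t) * (1 - z ^ 4 * t) = 1 - (z + z ^ 4) * t + t ^ 2 := by
      linear_combination t ^ 2 * h5
    have e2 : (1 - z ^ 2 * t) * (1 - z ^ 3 * t) = 1 - (z ^ 2 + z ^ 3) * t + t ^ 2 := by
      linear_combination t ^ 2 * h5
    have s1 : (z + z ^ 4) + (z ^ 2 + z ^ 3) = -1 := by linear_combination hz
    have s2 : (z + z ^ 4) * (z ^ 2 + z ^ 3) = -1 := by
      linear_combination hz + (z + z ^ 2) * h5
    have e3 : (1 - (z + z ^ 4) * t + t ^ 2) * (1 - (z ^ 2 + z ^ 3) * t + t ^ 2) =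
        1 + t + t ^ 2 + t ^ 3 + t ^ 4 := by
      linear_combination (-t - t ^ 3) * s1 + t ^ 2 * s2
    calc _ = (1 - t) * (((1 - z * t) * (1 - z ^ 4 * t)) * ((1 - z ^ 2 * t) * (1 - z ^ 3 * t))) := by
          ring
      _ = _ := by rw [e1, e2, e3]; ring
  have m := fun w => qP_mult w hq
  simp only [qP]
  rw [← (m _).tprod_mul (m _), ← ((m _).mul (m _)).tprod_mul (m _),
    ← (((m _).mul (m _)).mul (m _)).tprod_mul (m _),
    ← ((((m _).mul (m _)).mul (m _)).mul (m _)).tprod_mul (m _)]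
  refine tprod_congr fun n => ?_
  have := key (w * q ^ n)
  linear_combination this

lemma L_eval {q : ℂ} (h0 : q ≠ 0) (hq : ‖q‖ < 1) :
    (1 - Dbl q cc) * qP (q ^ 10) (q ^ 10) ^ 2 =
      qP (q ^ 1) (q ^ 1) * qP (q ^ 2) (q ^ 2) ^ 2 * qP (q ^ 5) (q ^ 5) ^ 3 := by
  obtain ⟨z, hz1, hz⟩ : ∃ z : ℂ, ‖z‖ = 1 ∧ 1 + z + z ^ 2 + z ^ 3 + z ^ 4 = 0 := by
    have P := Complex.isPrimitiveRoot_exp 5 (by norm_num)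
    refine ⟨_, P.norm'_eq_one (by norm_num), ?_⟩
    have := P.geom_sum_eq_zero (by norm_num)
    simpa [Finset.sum_range_succ] using this
  have h5 : z ^ 5 = 1 := by linear_combination (z - 1) * hz
  have z0 : z ≠ 0 := by rintro rfl; simp at hz1
  have ne : ∀ w : ℂ, ‖w‖ = 1 → w ≠ 1 → ∀ n : ℕ, w * q ^ n ≠ 1 := by
    intro w hw hw1 n
    rcases Nat.eq_zero_or_pos n with h | h
    · simpa [h] using hw1
    · intro e
      have := congrArg norm e
      rw [norm_mul, hw, one_mul] at this
      have h2 := norm_pow_lt hq (n := n) (by omega)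
      rw [this] at h2; simp at h2
  have ne' : ∀ w : ℂ, ‖w‖ = 1 → ∀ n : ℕ, q / w * q ^ n ≠ 1 := by
    intro w hw n e
    have := congrArg norm e
    rw [div_mul_eq_mul_div, ← pow_succ', norm_div, hw, div_one] at this
    have h2 := norm_pow_lt hq (n := n + 1) (by omega)
    rw [this] at h2; simp at h2
  have a1 : 1 + z ≠ 0 := by
    intro h; have : z = -1 := by linear_combination h
    rw [this] at hz; norm_num at hz
  have a2 : 1 + z ^ 2 ≠ 0 := by
    intro h
    have : (1 + z ^ 2) * (1 + z) = -z ^ 4 := by linear_combination hz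
    rw [h, zero_mul] at this
    exact pow_ne_zero 4 z0 (by linear_combination this)
  have n1 : ‖-z‖ = 1 := by simp [hz1]
  have n2 : ‖-z ^ 2‖ = 1 := by simp [hz1]
  have W := W_ident h0 hq (x := -z) (u := -z ^ 2) (neg_ne_zero.mpr z0)
    (neg_ne_zero.mpr (pow_ne_zero 2 z0)) (ne _ n1 fun h => a1 (by linear_combination -h)) (ne' _ n1)
    (ne _ n2 fun h => a2 (by linear_combination -h)) (ne' _ n2)
  have i1 : q / -z = -z ^ 4 * q := by
    field_simp; linear_combination h5
  have i2 : q / -z ^ 2 = -z ^ 3 * q := by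
    field_simp; linear_combination h5
  have i3 : q / z ^ 3 = z ^ 2 * q := by
    field_simp; linear_combination -h5
  have i4 : q / z ^ 4 = z * q := by
    field_simp; linear_combination -h5
  have i5 : -z / -z ^ 2 = z ^ 4 := by
    field_simp; linear_combination -h5
  have D := Dbl_lin hq hz hz1
  have Hn : ∀ n : ℕ, n ≠ 0 → qP (q ^ n) (q ^ n) ≠ 0 := fun n hn =>
    qP_ne_zero' (norm_pow_lt hq hn) (norm_pow_lt hq hn)
  have n1' := Hn 1 (by norm_num)
  have n2' := Hn 2 (by norm_num)
  have n5' := Hn 5 (by norm_num)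
  have n10' := Hn 10 (by norm_num)
  have r1 := qP_root hq hz q
  have r2 := qP_root hq hz (-q)
  have Hq := norm_pow_lt hq (n := 5) (by norm_num)
  rw [show (-q) ^ 5 = -q ^ 5 by ring, qP_neg_eq hq, qP_neg_eq Hq, ← pow_mul] at r2
  have t1 : th (-z * -z ^ 2) q * th (-z / -z ^ 2) q =
      (1 - z ^ 3) * (1 - z ^ 4) * (qP (z * q) q * qP (z ^ 2 * q) q * qP (z ^ 3 * q) q
        * qP (z ^ 4 * q) q) := by
    rw [i5, show -z * -z ^ 2 = z ^ 3 by ring, th, th, i3, i4, qP_succ (z ^ 3) hq,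
      qP_succ (z ^ 4) hq]; ring
  have t2 : th (-z) q * th (-z ^ 2) q =
      (1 + z) * (1 + z ^ 2) * (qP (z * -q) q * qP (z ^ 2 * -q) q * qP (z ^ 3 * -q) q
        * qP (z ^ 4 * -q) q) := by
    rw [th, th, i1, i2, qP_succ (-z) hq, qP_succ (-z ^ 2) hq]
    simp only [neg_mul, mul_neg]; ring
  have c1 : St (-z ^ 2) q + St (q / -z ^ 2) q - (St (-z) q + St (q / -z) q) =
      -(z + z ^ 4 - z ^ 2 - z ^ 3) * (1 - Dbl q cc) := by
    rw [i1, i2, St_succ (z := -z) hq, St_succ (z := -z ^ 2) hq]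
    have : -z ^ 2 / (1 - -z ^ 2) ^ 2 - -z / (1 - -z) ^ 2 = -(z + z ^ 4 - z ^ 2 - z ^ 3) := by
      rw [sub_neg_eq_add, sub_neg_eq_add]
      have : ((1 + z) * (1 + z ^ 2)) ^ 2 = z ^ 3 := by
        have : (1 + z) * (1 + z ^ 2) = -z ^ 4 := by linear_combination hz
        rw [this]; linear_combination z ^ 3 * h5
      rw [div_sub_div _ _ (pow_ne_zero 2 a2) (pow_ne_zero 2 a1), div_eq_iff (by positivity)]
      linear_combination (z + z ^ 4 - z ^ 2 - z ^ 3) * this + (z ^ 2 - z) * h5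
    linear_combination D + this
  rw [c1, t1, t2] at W
  have dd : (z + z ^ 4 - z ^ 2 - z ^ 3) ^ 2 = 5 := by
    have s1 : (z + z ^ 4) + (z ^ 2 + z ^ 3) = -1 := by linear_combination hz
    have s2 : (z + z ^ 4) * (z ^ 2 + z ^ 3) = -1 := by
      linear_combination hz + (z + z ^ 2) * h5
    linear_combination (z + z ^ 4 + z ^ 2 + z ^ 3 - 1) * s1 - 4 * s2
  have d0 : (z + z ^ 4 - z ^ 2 - z ^ 3) ≠ 0 := by
    intro h; rw [h] at dd; norm_num at dd
  have hs : ((1 + z) * (1 + z ^ 2)) ^ 2 = z ^ 3 := by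
    have : (1 + z) * (1 + z ^ 2) = -z ^ 4 := by linear_combination hz
    rw [this]; linear_combination z ^ 3 * h5
  have hd : (z + z ^ 4 - z ^ 2 - z ^ 3) * z ^ 3 = z ^ 2 * ((1 - z ^ 3) * (1 - z ^ 4)) := by
    linear_combination (z ^ 2 - z ^ 4) * h5
  rw [pow_one]
  rw [pow_one] at n1'
  norm_num at r2
  obtain ⟨P, hP⟩ : ∃ P, P = qP (z * q) q * qP (z ^ 2 * q) q * qP (z ^ 3 * q) q
    * qP (z ^ 4 * q) q := ⟨_, rfl⟩
  obtain ⟨N, hN⟩ : ∃ N, N = qP (z * -q) q * qP (z ^ 2 * -q) q * qP (z ^ 3 * -q) q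
    * qP (z ^ 4 * -q) q := ⟨_, rfl⟩
  rw [← hP, ← hN] at W
  have r1' : qP q q * P = qP (q ^ 5) (q ^ 5) := by rw [← r1, hP]; ring
  have r2' : qP (q ^ 2) (q ^ 2) * N * qP (q ^ 5) (q ^ 5) = qP (q ^ 10) (q ^ 10) * qP q q := by
    have : qP (q ^ 2) (q ^ 2) / qP q q * N = qP (q ^ 10) (q ^ 10) / qP (q ^ 5) (q ^ 5) := by
      rw [← r2, hN]; simp only [mul_neg]; ring
    field_simp at this
    linear_combination this
  have W2 : N ^ 2 * (1 - Dbl q cc) = P * qP q q ^ 4 := by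
    apply mul_left_cancel₀ (mul_ne_zero d0 (pow_ne_zero 3 z0))
    linear_combination (-1 : ℂ) * W - (z + z ^ 4 - z ^ 2 - z ^ 3) * (1 - Dbl q cc) * N ^ 2 * hs
      - P * qP q q ^ 4 * hd
  clear W r1 r2 hP hN t1 t2 c1 D
  generalize qP q q = E1 at *
  generalize qP (q ^ 2) (q ^ 2) = E2 at *
  generalize qP (q ^ 5) (q ^ 5) = E5 at *
  generalize qP (q ^ 10) (q ^ 10) = E10 at *
  apply mul_right_cancel₀ (pow_ne_zero 2 n1')
  calc _ = (1 - Dbl q cc) * (E10 * E1) ^ 2 := by ring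
    _ = (N ^ 2 * (1 - Dbl q cc)) * (E2 * E5) ^ 2 := by rw [← r2']; ring
    _ = E1 * P * E1 ^ 3 * (E2 * E5) ^ 2 := by rw [W2]; ring
    _ = _ := by rw [r1']; ring


noncomputable def Gt (q : ℂ) (m : ℕ) : ℂ := m * q ^ m / (1 - q ^ m)

lemma g_deriv {q : ℂ} (h0 : q ≠ 0) (hq : ‖q‖ < 1) {a : ℕ} (ha : 1 ≤ a) :
    ∃ D, HasSum (fun n : ℕ => Gt q (10 * n + a)) (-(q * D)) ∧
      HasDerivAt (fun x : ℂ => qP (x ^ a) (x ^ 10)) (qP (q ^ a) (q ^ 10) * D) q := by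
  obtain ⟨r, hr1, hr2⟩ := exists_between hq
  have hr0 : 0 ≤ r := (norm_nonneg _).trans hr1.le
  have hd : ∀ (n : ℕ) (s : ℂ), HasDerivAt (fun s : ℂ => -(s ^ (10 * n + a)))
      (-(((10 * n + a : ℕ) : ℂ) * s ^ (10 * n + a - 1))) s := fun n s =>
    (hasDerivAt_pow (10 * n + a) s).fun_neg
  have hne : ∀ n : ℕ, 1 - q ^ (10 * n + a) ≠ 0 := fun n => by
    obtain ⟨k, hk⟩ : ∃ k, 10 * n + a = k + 1 := ⟨10 * n + a - 1, by omega⟩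
    rw [hk]; exact one_sub_pow_ne hq k
  obtain ⟨D, h1, h2⟩ := prod_deriv (f := fun n s => -(s ^ (10 * n + a))) (U := Metric.ball 0 r)
    Metric.isOpen_ball (x := q) (by simpa using hr1)
    (fun n s _ => (hd n s).differentiableAt.differentiableWithinAt)
    (u := fun n => r ^ n) (summable_geometric_of_lt_one hr0 hr2)
    (fun n s hs => by
      simp only [Metric.mem_ball, dist_zero_right] at hs
      rw [norm_neg, norm_pow]
      calc ‖s‖ ^ (10 * n + a) ≤ r ^ (10 * n + a) := by gcongr
        _ ≤ r ^ n := pow_le_pow_of_le_one hr0 hr2.le (by omega))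
    (fun n => by rw [← sub_eq_add_neg]; exact hne n)
  have e : ∀ s : ℂ, ∏' n : ℕ, (1 + -(s ^ (10 * n + a))) = qP (s ^ a) (s ^ 10) := fun s => by
    rw [qP]
    exact tprod_congr fun n => by ring
  refine ⟨D, ?_, ?_⟩
  · have := (h1.mul_left q).neg
    refine (congrArg (fun f => HasSum f _) (funext fun n => ?_)).mp this
    rw [(hd n q).deriv, Gt, ← sub_eq_add_neg]
    obtain ⟨k, hk⟩ : ∃ k, 10 * n + a = k + 1 := ⟨10 * n + a - 1, by omega⟩
    have := hne n
    rw [hk] at this ⊢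
    rw [Nat.add_sub_cancel]
    field_simp
    ring
  · simp only [e] at h2
    exact h2

lemma cK_eq {q : ℂ} (h0 : q ≠ 0) : cK q = q *
    (qP (q ^ 1) (q ^ 10) * qP (q ^ 9) (q ^ 10) * (qP (q ^ 2) (q ^ 10) * qP (q ^ 8) (q ^ 10))) /
    (qP (q ^ 3) (q ^ 10) * qP (q ^ 7) (q ^ 10) * (qP (q ^ 4) (q ^ 10) * qP (q ^ 6) (q ^ 10))) := by
  rw [cK, th, th, th, th, show q ^ 10 / q ^ 1 = q ^ 9 by field_simp,
    show q ^ 10 / q ^ 2 = q ^ 8 by field_simp, show q ^ 10 / q ^ 3 = q ^ 7 by field_simp,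
    show q ^ 10 / q ^ 4 = q ^ 6 by field_simp]

lemma cK_deriv {q : ℂ} (h0 : q ≠ 0) (hq : ‖q‖ < 1) :
    HasDerivAt cK (cK q * (1 - Dbl q cc) / q) q := by
  obtain ⟨d1, s1, D1⟩ := g_deriv h0 hq (a := 1) (by norm_num)
  obtain ⟨d2, s2, D2⟩ := g_deriv h0 hq (a := 2) (by norm_num)
  obtain ⟨d3, s3, D3⟩ := g_deriv h0 hq (a := 3) (by norm_num)
  obtain ⟨d4, s4, D4⟩ := g_deriv h0 hq (a := 4) (by norm_num)
  obtain ⟨d6, s6, D6⟩ := g_deriv h0 hq (a := 6) (by norm_num)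
  obtain ⟨d7, s7, D7⟩ := g_deriv h0 hq (a := 7) (by norm_num)
  obtain ⟨d8, s8, D8⟩ := g_deriv h0 hq (a := 8) (by norm_num)
  obtain ⟨d9, s9, D9⟩ := g_deriv h0 hq (a := 9) (by norm_num)
  have S : Dbl q cc = -q * (d1 + d2 + d8 + d9 - d3 - d4 - d6 - d7) := by
    have H := Dbl_swap hq cc_bound
    have e : (fun m : ℕ => cc m * (m * q ^ m / (1 - q ^ m))) = fun m => cc m * Gt q m := rfl
    rw [e] at H
    have H2 := Nat.sumByResidueClasses H.summable 10
    rw [H.tsum_eq] at H2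
    rw [H2]
    have ec : ∀ (a n : ℕ), cc (a + 10 * n) = cc a := fun a n => by
      simp [cc]
    simp only [ec, tsum_mul_left]
    rw [show (∑ j : ZMod 10, cc j.val * ∑' m : ℕ, Gt q (j.val + 10 * m)) =
      ∑ j ∈ Finset.range 10, cc j * ∑' m : ℕ, Gt q (j + 10 * m) from
      (Finset.sum_range (fun j => cc j * ∑' m : ℕ, Gt q (j + 10 * m))).symm]
    simp only [Finset.sum_range_succ, Finset.sum_range_zero]
    have t : ∀ {a : ℕ} {d : ℂ}, HasSum (fun n : ℕ => Gt q (10 * n + a)) d →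
      ∑' m : ℕ, Gt q (a + 10 * m) = d := fun h => by
        rw [← h.tsum_eq]; exact tsum_congr fun n => by rw [add_comm]
    rw [t s1, t s2, t s3, t s4, t s6, t s7, t s8, t s9]
    norm_num [cc]
    ring
  have Hq := norm_pow_lt hq (n := 10) (by norm_num)
  have hg : ∀ n : ℕ, n ≠ 0 → qP (q ^ n) (q ^ 10) ≠ 0 := fun n hn =>
    qP_ne_zero' Hq (norm_pow_lt hq hn)
  have n1 := hg 1 (by norm_num)
  have n2 := hg 2 (by norm_num)
  have n3 := hg 3 (by norm_num)
  have n4 := hg 4 (by norm_num)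
  have n6 := hg 6 (by norm_num)
  have n7 := hg 7 (by norm_num)
  have n8 := hg 8 (by norm_num)
  have n9 := hg 9 (by norm_num)
  have T := (((hasDerivAt_id' q).fun_mul ((D1.fun_mul D9).fun_mul (D2.fun_mul D8)))).fun_div
    ((D3.fun_mul D7).fun_mul (D4.fun_mul D6)) (by simp [n3, n4, n6, n7])
  have ev : cK =ᶠ[nhds q] _ := (eventually_ne_nhds h0).mono fun x hx => cK_eq hx
  refine (T.congr_of_eventuallyEq ev).congr_deriv ?_
  rw [cK_eq h0, S]
  field_simp
  ring


lemma ofReal_tprod' (f : ℕ → ℝ) : ((∏' n, f n : ℝ) : ℂ) = ∏' n, (f n : ℂ) :=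
  Function.LeftInverse.map_tprod (g := Complex.ofRealHom) (g' := Complex.re) f
    Complex.continuous_ofReal Complex.continuous_re Complex.ofReal_re

lemma eulerE_eq (x : ℝ) (n : ℕ) : ((eulerE (x ^ n) : ℝ) : ℂ) = qP ((x : ℂ) ^ n) ((x : ℂ) ^ n) := by
  rw [eulerE, ofReal_tprod', qP]
  exact tprod_congr fun j => by push_cast; ring

lemma ramK_eq {x : ℝ} (h0 : 0 < x) (h1 : x < 1) : ((ramK x : ℝ) : ℂ) = cK (x : ℂ) := by
  have hx : (x : ℂ) ≠ 0 := by exact_mod_cast h0.ne'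
  have hq : ‖(x : ℂ)‖ < 1 := by simpa [abs_of_pos h0] using h1
  have Hq := norm_pow_lt hq (n := 10) (by norm_num)
  have hg : ∀ n : ℕ, n ≠ 0 → qP ((x : ℂ) ^ n) ((x : ℂ) ^ 10) ≠ 0 := fun n hn =>
    qP_ne_zero' Hq (norm_pow_lt hq hn)
  have p := fun n : ℕ => qP_hasProd ((x : ℂ) ^ n) Hq
  have T := ((((p 1).mul (p 9)).mul ((p 2).mul (p 8)))).div₀
    (((p 3).mul (p 7)).mul ((p 4).mul (p 6)))
    (mul_ne_zero (mul_ne_zero (hg 3 (by norm_num)) (hg 7 (by norm_num)))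
      (mul_ne_zero (hg 4 (by norm_num)) (hg 6 (by norm_num))))
  rw [cK_eq hx, mul_div_assoc, ← T.tprod_eq, ramK, Complex.ofReal_mul, ofReal_tprod']
  congr 1
  refine tprod_congr fun j => ?_
  push_cast
  congr 1 <;> ring

lemma main_c {q : ℂ} (h0 : q ≠ 0) (hq : ‖q‖ < 1) :
    HasDerivAt (fun z : ℂ => (1 / 4) * ((1 + cK z ^ 2) / (1 - 4 * cK z - cK z ^ 2)))
      (qP (q ^ 2) (q ^ 2) ^ 8 * qP (q ^ 5) (q ^ 5) ^ 3 / qP (q ^ 1) (q ^ 1) ^ 7) q := by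
  obtain ⟨k0, A, B⟩ := algs h0 hq
  have L := L_eval h0 hq
  have K := cK_deriv h0 hq
  have hg : ∀ n : ℕ, n ≠ 0 → qP (q ^ n) (q ^ n) ≠ 0 := fun n hn =>
    qP_ne_zero' (norm_pow_lt hq hn) (norm_pow_lt hq hn)
  have n1 := hg 1 (by norm_num)
  have n2 := hg 2 (by norm_num)
  have n5 := hg 5 (by norm_num)
  have n10 := hg 10 (by norm_num)
  generalize qP (q ^ 1) (q ^ 1) = a at *
  generalize qP (q ^ 2) (q ^ 2) = b at *
  generalize qP (q ^ 5) (q ^ 5) = c at *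
  generalize qP (q ^ 10) (q ^ 10) = d at *
  generalize 1 - Dbl q cc = l at *
  have B0 : 1 - 4 * cK q - cK q ^ 2 ≠ 0 := by
    intro h
    rw [h, zero_mul] at B
    have : cK q * (c * a ^ 3) ≠ 0 := by positivity
    exact this B.symm
  have T := (((K.fun_pow 2).const_add 1).fun_div
    (((K.const_mul 4).const_sub 1).fun_sub (K.fun_pow 2)) B0).const_mul (1 / 4)
  refine T.congr_deriv ?_
  have A' : 1 + cK q - cK q ^ 2 = cK q * (b ^ 4 * c ^ 2) / (q * d ^ 4 * a ^ 2) := by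
    rw [eq_div_iff (by positivity), A]
  have B' : 1 - 4 * cK q - cK q ^ 2 = cK q * (c * a ^ 3) / (q * d ^ 3 * b) := by
    rw [eq_div_iff (by positivity), B]
  have L' : l = a * b ^ 2 * c ^ 3 / d ^ 2 := by
    rw [eq_div_iff (by positivity), L]
  trans (cK q * l / q) * (1 + cK q - cK q ^ 2) / (1 - 4 * cK q - cK q ^ 2) ^ 2
  · rw [mul_div_assoc', div_left_inj' (by positivity)]
    push_cast
    ring
  · rw [A', B', L']
    field_simp

theorem stmt_13 (q : ℝ) (hq0 : 0 < q) (hq1 : q < 1) :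
    HasDerivAt (fun x : ℝ => (1 / 4) * ((1 + ramK x ^ 2) / (1 - 4 * ramK x - ramK x ^ 2)))
      (eulerE (q ^ 2) ^ 8 * eulerE (q ^ 5) ^ 3 / eulerE q ^ 7) q := by
  have hx : (q : ℂ) ≠ 0 := by exact_mod_cast hq0.ne'
  have hq : ‖(q : ℂ)‖ < 1 := by simpa [abs_of_pos hq0] using hq1
  have M := (main_c hx hq).real_of_complex
  rw [← eulerE_eq, ← eulerE_eq, ← eulerE_eq, pow_one] at M
  have e : (((eulerE (q ^ 2) : ℝ) : ℂ) ^ 8 * ((eulerE (q ^ 5) : ℝ) : ℂ) ^ 3 /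
      ((eulerE q : ℝ) : ℂ) ^ 7).re = eulerE (q ^ 2) ^ 8 * eulerE (q ^ 5) ^ 3 / eulerE q ^ 7 := by
    exact_mod_cast Complex.ofReal_re _
  rw [e] at M
  refine M.congr_of_eventuallyEq ?_
  filter_upwards [Ioo_mem_nhds hq0 hq1] with x hx
  rw [← ramK_eq hx.1 hx.2]
  have : (1 / 4 : ℂ) * ((1 + ((ramK x : ℝ) : ℂ) ^ 2) / (1 - 4 * ((ramK x : ℝ) : ℂ) -
      ((ramK x : ℝ) : ℂ) ^ 2)) =
      (((1 / 4) * ((1 + ramK x ^ 2) / (1 - 4 * ramK x - ramK x ^ 2)) : ℝ) : ℂ) := by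
    push_cast; rfl
  rw [this, Complex.ofReal_re]
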